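/- Let d ≥ 1, let β ∈ (0, 1/2), and let μ be the probability measure on ℝ^d with density proportional to exp(−|x|⁴/4 + β|x|²/2). Then for every compactly supported smooth function f : ℝ^d → ℝ one has Ent_μ(f²) ≤ (4e/(1−2β)) · ∫_{ℝ^d} |∇f|² dμ. In particular, μ satisfies a logarithmic Sobolev inequality with a constant depending only on β and not on the dimension d. -/

import Mathlib

open Real MeasureTheory Finset Matrix Set

noncomputable section

/-- Partial derivative of `f` in the `i`-th coordinate direction. -/
def pd {d : ℕ} (i : Fin d) (f : EuclideanSpace ℝ (Fin d) → ℝ)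
    (x : EuclideanSpace ℝ (Fin d)) : ℝ :=
  fderiv ℝ f x (EuclideanSpace.single i 1)

/-- Laplacian of `f`. -/
def lap {d : ℕ} (f : EuclideanSpace ℝ (Fin d) → ℝ) (x : EuclideanSpace ℝ (Fin d)) : ℝ :=
  ∑ i, pd i (fun y => pd i f y) x

/-- Diffusion operator `L f = Δ f - ∇V ⋅ ∇f` associated with the potential `V`. -/
def diffOp {d : ℕ} (V f : EuclideanSpace ℝ (Fin d) → ℝ) (x : EuclideanSpace ℝ (Fin d)) : ℝ :=
  lap f x - ∑ i, pd i V x * pd i f x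

/-- Hessian matrix of `V` at `x`. -/
def hess {d : ℕ} (V : EuclideanSpace ℝ (Fin d) → ℝ) (x : EuclideanSpace ℝ (Fin d)) :
    Matrix (Fin d) (Fin d) ℝ :=
  Matrix.of fun i j => pd i (fun y => pd j V y) x

/-- Smallest (real) eigenvalue of a matrix: the infimum of its real spectrum. -/
def minEig {d : ℕ} (A : Matrix (Fin d) (Fin d) ℝ) : ℝ :=
  sInf (spectrum ℝ A)

/-- The probability measure with density proportional to `exp (-V)` w.r.t. Lebesgue measure. -/
def gibbs {d : ℕ} (V : EuclideanSpace ℝ (Fin d) → ℝ) : Measure (EuclideanSpace ℝ (Fin d)) :=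
  (∫⁻ x, ENNReal.ofReal (Real.exp (-V x)))⁻¹ •
    volume.withDensity fun x => ENNReal.ofReal (Real.exp (-V x))

/-- Entropy of `g` with respect to the measure `μ`. -/
def entropy {d : ℕ} (μ : Measure (EuclideanSpace ℝ (Fin d)))
    (g : EuclideanSpace ℝ (Fin d) → ℝ) : ℝ :=
  ∫ x, g x * Real.log (g x) ∂μ - (∫ x, g x ∂μ) * Real.log (∫ x, g x ∂μ)

/-- Squared Euclidean norm of the gradient of `f` at `x`. -/
def gradSq {d : ℕ} (f : EuclideanSpace ℝ (Fin d) → ℝ) (x : EuclideanSpace ℝ (Fin d)) : ℝ :=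
  ∑ i, (pd i f x) ^ 2

end

/-!
For a `ρ`-strongly convex potential `U`, the Prékopa–Leindler inequality, applied to the densities
`exp (g / (1 - s) - U)`, `exp (-U)` and `exp (w - U)` with
`w = g + s * |∇g| ^ 2 / (2 * ρ) + o(s)`, gives `(∫ exp (g / (1 - s))) ^ (1 - s) ≤ ∫ exp w` under
the Gibbs measure of `U`. Both sides equal `∫ exp g` at `s = 0`, and the comparison of their
derivatives there is the logarithmic Sobolev inequality with constant `2 / ρ` (Bobkov–Ledoux). The
double-well potential is not convex, but it is within `1 / 16` of a `(1 / 2 - β)`-strongly convex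
one, so by the Holley–Stroock perturbation argument it satisfies the inequality with an extra
factor `exp (1 / 16) ≤ exp 1`.
-/

open Filter InformationTheory
open scoped ENNReal NNReal Pointwise Topology

/-! ### The Prékopa–Leindler inequality -/

section PrekopaLeindler

theorem volume_add_le_volume_add_of_isCompact {K L : Set ℝ} (hK : IsCompact K) (hL : IsCompact L)
    (hKn : K.Nonempty) (hLn : L.Nonempty) : volume K + volume L ≤ volume (K + L) := by
  have hmax := hK.sSup_mem hKn
  have hmin := hL.sInf_mem hLn
  have hmeas : MeasurableSet ((sSup K + ·) '' L) :=
    (hL.image (by fun_prop)).measurableSet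
  -- `K + min L` and `max K + L` lie in `K + L` and share only the point `max K + min L`.
  have hdisj : AEDisjoint volume ((· + sInf L) '' K) ((sSup K + ·) '' L) := by
    refine measure_mono_null (t := {sSup K + sInf L}) ?_ (by simp)
    rintro z ⟨⟨x, hx, rfl⟩, ⟨y, hy, hxy⟩⟩
    have hxmax : x ≤ sSup K := le_csSup hK.bddAbove hx
    have hymin : sInf L ≤ y := csInf_le hL.bddBelow hy
    simp only [mem_singleton_iff] at hxy ⊢
    linarith
  calc volume K + volume L
      = volume ((· + sInf L) '' K) + volume ((sSup K + ·) '' L) := by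
        simp only [Set.image_add_right, Set.image_add_left, measure_preimage_add_right,
          measure_preimage_add]
    _ = volume ((· + sInf L) '' K ∪ (sSup K + ·) '' L) :=
        (measure_union₀ hmeas.nullMeasurableSet hdisj).symm
    _ ≤ volume (K + L) := by
        refine measure_mono (union_subset ?_ ?_)
        · exact image_subset_iff.2 fun x hx => add_mem_add hx hmin
        · exact image_subset_iff.2 fun y hy => add_mem_add hmax hy

theorem volume_add_le_volume_add {A B : Set ℝ} (hA : MeasurableSet A) (hB : MeasurableSet B)
    (hAn : A.Nonempty) (hBn : B.Nonempty) : volume A + volume B ≤ volume (A + B) := by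
  obtain ⟨a, ha⟩ := hAn
  obtain ⟨b, hb⟩ := hBn
  rw [hA.measure_eq_iSup_isCompact, hB.measure_eq_iSup_isCompact]
  simp only [iSup_and']
  refine ENNReal.biSup_add_biSup_le' ⟨∅, by simp⟩ ⟨∅, by simp⟩ ?_
  rintro K ⟨hKA, hK⟩ L ⟨hLB, hL⟩
  calc volume K + volume L ≤ volume (insert a K) + volume (insert b L) := by
        gcongr <;> exact subset_insert _ _
    _ ≤ volume (insert a K + insert b L) :=
        volume_add_le_volume_add_of_isCompact (hK.insert a) (hL.insert b)
          (insert_nonempty a K) (insert_nonempty b L)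
    _ ≤ volume (A + B) := by
        gcongr <;> exact insert_subset ‹_› ‹_›

theorem lintegral_eq_lintegral_meas_ofReal_lt {α : Type*} [MeasurableSpace α] {μ : Measure α}
    {f : α → ℝ≥0∞} (hf : AEMeasurable f μ) (hf_ne : ∀ x, f x ≠ ∞) :
    ∫⁻ x, f x ∂μ = ∫⁻ r in Ioi (0 : ℝ), μ {x | ENNReal.ofReal r < f x} := by
  have layercake := lintegral_eq_lintegral_meas_lt μ (f := fun x => (f x).toReal)
    (Eventually.of_forall fun _ => ENNReal.toReal_nonneg) hf.ennreal_toReal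
  simp only [ENNReal.ofReal_toReal (hf_ne _)] at layercake
  refine layercake.trans (setLIntegral_congr_fun measurableSet_Ioi fun r hr => ?_)
  simp only [ENNReal.ofReal_lt_iff_lt_toReal (le_of_lt hr) (hf_ne _)]

theorem ofReal_mul_volume_add_le_volume {t s : ℝ} (ht : 0 < t) (hs : 0 < s) {A B C : Set ℝ}
    (hA : MeasurableSet A) (hB : MeasurableSet B) (hAn : A.Nonempty) (hBn : B.Nonempty)
    (h : ∀ x ∈ A, ∀ y ∈ B, t * x + s * y ∈ C) :
    ENNReal.ofReal t * volume A + ENNReal.ofReal s * volume B ≤ volume C := by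
  have volume_smul {r : ℝ} (hr : 0 < r) (S : Set ℝ) :
      volume (r • S) = ENNReal.ofReal r * volume S := by
    simp [abs_of_pos hr]
  rw [← volume_smul ht, ← volume_smul hs]
  refine (volume_add_le_volume_add (hA.const_smul₀ t) (hB.const_smul₀ s) hAn.smul_set
    hBn.smul_set).trans (measure_mono ?_)
  rintro _ ⟨_, ⟨x, hx, rfl⟩, _, ⟨y, hy, rfl⟩, rfl⟩
  exact h x hx y hy

theorem ofReal_mul_lintegral_add_le_of_iSup_eq_one {t s : ℝ} (ht : 0 < t) (hs : 0 < s)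
    {f g h : ℝ → ℝ≥0∞} (hf : Measurable f) (hg : Measurable g) (hh : Measurable h)
    (hf_sup : ⨆ x, f x = 1) (hg_sup : ⨆ x, g x = 1)
    (H : ∀ x y, min (f x) (g y) ≤ h (t * x + s * y)) :
    ENNReal.ofReal t * (∫⁻ x, f x) + ENNReal.ofReal s * (∫⁻ x, g x) ≤ ∫⁻ x, h x := by
  have hf_le x : f x ≤ 1 := hf_sup ▸ le_iSup f x
  have hg_le x : g x ≤ 1 := hg_sup ▸ le_iSup g x
  have ne_top {u : ℝ → ℝ≥0∞} (hu : ∀ x, u x ≤ 1) x : u x ≠ ∞ :=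
    ((hu x).trans_lt ENNReal.one_lt_top).ne
  have level_antitone (u : ℝ → ℝ≥0∞) :
      Antitone fun r : ℝ => volume {x | ENNReal.ofReal r < u x} := fun a b hab =>
    measure_mono fun x hx => (ENNReal.ofReal_le_ofReal hab).trans_lt hx
  have level_empty {u : ℝ → ℝ≥0∞} (hu : ∀ x, u x ≤ 1) {r : ℝ} (hr : 1 ≤ r) :
      {x | ENNReal.ofReal r < u x} = ∅ :=
    eq_empty_of_forall_notMem fun x hx =>
      (hx.trans_le (hu x)).not_ge (ENNReal.one_le_ofReal.2 hr)
  have level_nonempty {u : ℝ → ℝ≥0∞} (hu : ⨆ x, u x = 1) {r : ℝ} (hr : r < 1) :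
      {x | ENNReal.ofReal r < u x}.Nonempty :=
    lt_iSup_iff.1 ((ENNReal.ofReal_lt_one.2 hr).trans_eq hu.symm)
  refine le_trans ?_ (lintegral_mono (f := fun x => min (h x) 1) fun x => min_le_left _ _)
  rw [lintegral_eq_lintegral_meas_ofReal_lt hf.aemeasurable (ne_top hf_le),
    lintegral_eq_lintegral_meas_ofReal_lt hg.aemeasurable (ne_top hg_le),
    lintegral_eq_lintegral_meas_ofReal_lt (hh.min measurable_const).aemeasurable
      (ne_top fun x => min_le_right _ _),
    ← lintegral_const_mul _ (level_antitone f).measurable,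
    ← lintegral_const_mul _ (level_antitone g).measurable,
    ← lintegral_add_left ((level_antitone f).measurable.const_mul _)]
  refine setLIntegral_mono' measurableSet_Ioi fun r _ => ?_
  rcases lt_or_ge r 1 with hr | hr
  · exact ofReal_mul_volume_add_le_volume ht hs (measurableSet_lt measurable_const hf)
      (measurableSet_lt measurable_const hg) (level_nonempty hf_sup hr) (level_nonempty hg_sup hr)
      fun x hx y hy => lt_min ((lt_min hx hy).trans_le (H x y)) (ENNReal.ofReal_lt_one.2 hr)
  · simp [level_empty hf_le hr, level_empty hg_le hr]

theorem min_le_rpow_mul_rpow {t s : ℝ} (ht : 0 < t) (hs : 0 < s) (hts : t + s = 1) (a b : ℝ≥0∞) :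
    min a b ≤ a ^ t * b ^ s :=
  calc min a b = min a b ^ t * min a b ^ s := by
        rw [← ENNReal.rpow_add_of_nonneg _ _ ht.le hs.le, hts, ENNReal.rpow_one]
    _ ≤ a ^ t * b ^ s := by
        gcongr
        exacts [min_le_left _ _, min_le_right _ _]

theorem rpow_mul_rpow_le_ofReal_mul_add {t s : ℝ} (ht : 0 < t) (hs : 0 < s) (hts : t + s = 1)
    (a b : ℝ≥0∞) : a ^ t * b ^ s ≤ ENNReal.ofReal t * a + ENNReal.ofReal s * b := by
  have hpq : t⁻¹.HolderConjugate s⁻¹ :=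
    Real.holderConjugate_iff.2 ⟨(one_lt_inv₀ ht).2 (by linarith), by simpa using hts⟩
  simpa [ENNReal.rpow_rpow_inv, ht.ne', hs.ne', ENNReal.ofReal_inv_of_pos, ht, hs, div_eq_mul_inv,
    mul_comm] using ENNReal.young_inequality (a ^ t) (b ^ s) hpq

theorem rpow_lintegral_mul_rpow_lintegral_le_of_iSup_ne_top {t s : ℝ} (ht : 0 < t) (hs : 0 < s)
    (hts : t + s = 1) {f g h : ℝ → ℝ≥0∞} (hf : Measurable f) (hg : Measurable g)
    (hh : Measurable h) (hf_sup : ⨆ x, f x ≠ ∞) (hg_sup : ⨆ x, g x ≠ ∞)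
    (H : ∀ x y, f x ^ t * g y ^ s ≤ h (t * x + s * y)) :
    (∫⁻ x, f x) ^ t * (∫⁻ x, g x) ^ s ≤ ∫⁻ x, h x := by
  set M := ⨆ x, f x
  set N := ⨆ x, g x
  rcases eq_or_ne M 0 with hM0 | hM0
  · simp [ENNReal.iSup_eq_zero.1 hM0, ht]
  rcases eq_or_ne N 0 with hN0 | hN0
  · simp [ENNReal.iSup_eq_zero.1 hN0, hs]
  set P := M⁻¹ ^ t * N⁻¹ ^ s with hP
  have hP0 : P ≠ 0 := by simp [hP, hM0, hN0, hf_sup, hg_sup, ENNReal.rpow_eq_zero_iff]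
  have hP_top : P ≠ ∞ := ENNReal.mul_ne_top
    (ENNReal.rpow_ne_top_of_nonneg ht.le (ENNReal.inv_ne_top.2 hM0))
    (ENNReal.rpow_ne_top_of_nonneg hs.le (ENNReal.inv_ne_top.2 hN0))
  have normalize (a b : ℝ≥0∞) : (M⁻¹ * a) ^ t * (N⁻¹ * b) ^ s = P * (a ^ t * b ^ s) := by
    rw [ENNReal.mul_rpow_of_nonneg _ _ ht.le, ENNReal.mul_rpow_of_nonneg _ _ hs.le,
      mul_mul_mul_comm]
  have min_le (x y : ℝ) : min (M⁻¹ * f x) (N⁻¹ * g y) ≤ P * h (t * x + s * y) := by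
    refine (min_le_rpow_mul_rpow ht hs hts _ _).trans ?_
    rw [normalize]
    gcongr
    exact H x y
  have normalized := ofReal_mul_lintegral_add_le_of_iSup_eq_one ht hs (hf.const_mul M⁻¹)
    (hg.const_mul N⁻¹) (hh.const_mul P)
    (by rw [← ENNReal.mul_iSup, ENNReal.inv_mul_cancel hM0 hf_sup])
    (by rw [← ENNReal.mul_iSup, ENNReal.inv_mul_cancel hN0 hg_sup]) min_le
  rw [lintegral_const_mul _ hf, lintegral_const_mul _ hg, lintegral_const_mul _ hh] at normalized
  have scaled := (rpow_mul_rpow_le_ofReal_mul_add ht hs hts _ _).trans normalized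
  rw [normalize] at scaled
  exact (ENNReal.mul_le_mul_iff_right hP0 hP_top).1 scaled

theorem tendsto_lintegral_min_natCast {α : Type*} [MeasurableSpace α] {μ : Measure α}
    {f : α → ℝ≥0∞} (hf : AEMeasurable f μ) :
    Tendsto (fun n : ℕ => ∫⁻ x, min (f x) n ∂μ) atTop (𝓝 (∫⁻ x, f x ∂μ)) := by
  refine lintegral_tendsto_of_tendsto_of_monotone (fun n => hf.min aemeasurable_const)
    (Eventually.of_forall fun x a b hab => by dsimp only; gcongr)
    (Eventually.of_forall fun x => ?_)
  simpa using (tendsto_const_nhds (x := f x)).min ENNReal.tendsto_nat_nhds_top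

/-- The measure `μ` satisfies the Prékopa–Leindler inequality. As a property of the measure it is
stable under products, which carries it from the line to Euclidean space. -/
def PrekopaLeindler {E : Type*} [AddCommMonoid E] [Module ℝ E] [MeasurableSpace E]
    (μ : Measure E) : Prop :=
  ∀ ⦃t s : ℝ⦄, 0 < t → 0 < s → t + s = 1 → ∀ ⦃f g h : E → ℝ≥0∞⦄, Measurable f → Measurable g →
    Measurable h → (∀ x y, f x ^ t * g y ^ s ≤ h (t • x + s • y)) →
    (∫⁻ x, f x ∂μ) ^ t * (∫⁻ x, g x ∂μ) ^ s ≤ ∫⁻ x, h x ∂μ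

theorem prekopaLeindler_volume_real : PrekopaLeindler (volume : Measure ℝ) := by
  intro t s ht hs hts f g h hf hg hh H
  rcases eq_or_ne (∫⁻ x, f x) 0 with hf0 | hf0
  · simp [hf0, ht]
  rcases eq_or_ne (∫⁻ x, g x) 0 with hg0 | hg0
  · simp [hg0, hs]
  have truncated_rpow {u : ℝ → ℝ≥0∞} (hu : Measurable u) (r : ℝ) :
      Tendsto (fun n : ℕ => (∫⁻ x, min (u x) n) ^ r) atTop (𝓝 ((∫⁻ x, u x) ^ r)) :=
    ENNReal.continuous_rpow_const.continuousAt.tendsto.comp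
      (tendsto_lintegral_min_natCast hu.aemeasurable)
  have truncated := ENNReal.Tendsto.mul
    (truncated_rpow hf t) (Or.inl (by simp [ENNReal.rpow_eq_zero_iff, hf0, ht.not_gt]))
    (truncated_rpow hg s) (Or.inl (by simp [ENNReal.rpow_eq_zero_iff, hg0, hs.not_gt]))
  refine le_of_tendsto' truncated fun n => ?_
  have sup_ne_top (u : ℝ → ℝ≥0∞) : ⨆ x, min (u x) (n : ℝ≥0∞) ≠ ∞ :=
    ((iSup_le fun x => min_le_right _ _).trans_lt (ENNReal.natCast_lt_top n)).ne
  refine rpow_lintegral_mul_rpow_lintegral_le_of_iSup_ne_top ht hs hts (hf.min measurable_const)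
    (hg.min measurable_const) hh (sup_ne_top f) (sup_ne_top g) fun x y => le_trans ?_ (H x y)
  gcongr
  exacts [min_le_left _ _, min_le_left _ _]

variable {E F : Type*} [AddCommMonoid E] [Module ℝ E] [MeasurableSpace E] [AddCommMonoid F]
  [Module ℝ F] [MeasurableSpace F] {μ : Measure E} {ν : Measure F}

theorem PrekopaLeindler.prod [SFinite ν] (hμ : PrekopaLeindler μ) (hν : PrekopaLeindler ν) :
    PrekopaLeindler (μ.prod ν) := by
  intro t s ht hs hts f g h hf hg hh H
  rw [lintegral_prod _ hf.aemeasurable, lintegral_prod _ hg.aemeasurable,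
    lintegral_prod _ hh.aemeasurable]
  refine hμ ht hs hts hf.lintegral_prod_right' hg.lintegral_prod_right' hh.lintegral_prod_right'
    fun x y => ?_
  exact hν ht hs hts (hf.comp measurable_prodMk_left) (hg.comp measurable_prodMk_left)
    (hh.comp measurable_prodMk_left) fun x' y' => H (x, x') (y, y')

theorem PrekopaLeindler.of_measurePreserving {e : E → F} (hμ : PrekopaLeindler μ)
    (he : MeasurePreserving e μ ν) (he_lin : IsLinearMap ℝ e) : PrekopaLeindler ν := by
  intro t s ht hs hts f g h hf hg hh H
  rw [← he.lintegral_comp hf, ← he.lintegral_comp hg, ← he.lintegral_comp hh]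
  refine hμ ht hs hts (hf.comp he.measurable) (hg.comp he.measurable) (hh.comp he.measurable)
    fun x y => ?_
  rw [he_lin.map_add, he_lin.map_smul, he_lin.map_smul]
  exact H _ _

theorem prekopaLeindler_volume_pi (n : ℕ) : PrekopaLeindler (volume : Measure (Fin n → ℝ)) := by
  induction n with
  | zero =>
    intro t s _ _ _ f g h _ _ _ H
    rw [Measure.volume_pi_eq_dirac 0, lintegral_dirac, lintegral_dirac, lintegral_dirac]
    simpa using H 0 0
  | succ n ih =>
    refine (prekopaLeindler_volume_real.prod ih).of_measurePreserving
      (volume_preserving_piFinSuccAbove (fun _ : Fin (n + 1) => ℝ) 0).symm ⟨?_, ?_⟩ <;>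
    · intros
      ext i
      refine Fin.cases ?_ (fun j => ?_) i <;> simp [MeasurableEquiv.piFinSuccAbove]

theorem prekopaLeindler_volume_euclideanSpace (n : ℕ) :
    PrekopaLeindler (volume : Measure (EuclideanSpace ℝ (Fin n))) :=
  (prekopaLeindler_volume_pi n).of_measurePreserving (PiLp.volume_preserving_toLp (Fin n))
    ⟨WithLp.toLp_add 2, WithLp.toLp_smul 2⟩

end PrekopaLeindler

/-! ### Gradients -/

section Gradient

theorem le_add_fderiv_add_of_lipschitzWith_fderiv {E : Type*} [NormedAddCommGroup E]
    [NormedSpace ℝ E] {φ : E → ℝ} {C : ℝ≥0} (hφ : Differentiable ℝ φ)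
    (hC : LipschitzWith C (fderiv ℝ φ)) (x z : E) :
    φ x ≤ φ z + fderiv ℝ φ z (x - z) + C * ‖x - z‖ ^ 2 := by
  have fderiv_sub_le : ∀ w ∈ segment ℝ z x, ‖fderiv ℝ φ w - fderiv ℝ φ z‖ ≤ C * ‖x - z‖ :=
    fun w hw => (hC.norm_sub_le w z).trans
      (mul_le_mul_of_nonneg_left (norm_sub_le_of_mem_segment hw) C.coe_nonneg)
  have remainder_le := (convex_segment z x).norm_image_sub_le_of_norm_fderiv_le' (𝕜 := ℝ)
    (fun w _ => hφ.differentiableAt) fderiv_sub_le (left_mem_segment ℝ z x)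
    (right_mem_segment ℝ z x)
  linarith [le_of_abs_le remainder_le]

variable {d : ℕ} {f : EuclideanSpace ℝ (Fin d) → ℝ}

theorem gradSq_eq_norm_fderiv_sq (f : EuclideanSpace ℝ (Fin d) → ℝ)
    (x : EuclideanSpace ℝ (Fin d)) : gradSq f x = ‖fderiv ℝ f x‖ ^ 2 := by
  rw [← (InnerProductSpace.toDual ℝ _).symm.norm_map, EuclideanSpace.real_norm_sq_eq]
  refine Finset.sum_congr rfl fun i _ => ?_
  rw [pd, ← InnerProductSpace.toDual_symm_apply, EuclideanSpace.inner_single_right]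
  simp

theorem gradSq_nonneg (f : EuclideanSpace ℝ (Fin d) → ℝ) (x : EuclideanSpace ℝ (Fin d)) :
    0 ≤ gradSq f x :=
  gradSq_eq_norm_fderiv_sq f x ▸ sq_nonneg _

theorem continuous_gradSq (hf : ContDiff ℝ 1 f) : Continuous (gradSq f) := by
  rw [funext (gradSq_eq_norm_fderiv_sq f)]
  exact (hf.continuous_fderiv one_ne_zero).norm.pow 2

theorem hasCompactSupport_gradSq (hf : HasCompactSupport (fderiv ℝ f)) :
    HasCompactSupport (gradSq f) :=
  hf.mono fun x hx hfx => hx (by rw [gradSq_eq_norm_fderiv_sq, hfx]; simp)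

theorem fderiv_apply_le_gradSq_div_add (f : EuclideanSpace ℝ (Fin d) → ℝ)
    (x k : EuclideanSpace ℝ (Fin d)) {q : ℝ} (hq : 0 < q) :
    fderiv ℝ f x k ≤ gradSq f x / (2 * q) + q / 2 * ‖k‖ ^ 2 := by
  rw [gradSq_eq_norm_fderiv_sq]
  calc fderiv ℝ f x k ≤ ‖fderiv ℝ f x‖ * ‖k‖ := le_of_abs_le ((fderiv ℝ f x).le_opNorm k)
    _ = ‖fderiv ℝ f x‖ ^ 2 / (2 * q) + q / 2 * ‖k‖ ^ 2
        - (‖fderiv ℝ f x‖ - q * ‖k‖) ^ 2 / (2 * q) := by field_simp; ring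
    _ ≤ ‖fderiv ℝ f x‖ ^ 2 / (2 * q) + q / 2 * ‖k‖ ^ 2 := sub_le_self _ (by positivity)

end Gradient

/-! ### Gibbs measures of strongly convex potentials -/

section StrongConvexOn

variable {E : Type*} [NormedAddCommGroup E] [InnerProductSpace ℝ E] [FiniteDimensional ℝ E]
  {ρ : ℝ} {U : E → ℝ}

theorem continuous_of_strongConvexOn_univ (hU : StrongConvexOn univ ρ U) : Continuous U := by
  have hquad : Continuous fun x : E => ρ / 2 * ‖x‖ ^ 2 := by fun_prop
  exact ((strongConvexOn_iff_convex.1 hU).locallyLipschitz.continuous.add hquad).congr fun x =>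
    sub_add_cancel _ _

theorem exists_sq_norm_add_inner_add_le_of_strongConvexOn (hU : StrongConvexOn univ ρ U) :
    ∃ (v : E) (c : ℝ), ∀ x, ρ / 2 * ‖x‖ ^ 2 + inner ℝ v x + c ≤ U x := by
  have hconv := strongConvexOn_iff_convex.1 hU
  obtain ⟨l, c, hlc, -⟩ := hconv.exists_affine_le_of_lt (𝕜 := ℝ) (Set.mem_univ 0)
    (sub_one_lt _) isClosed_univ
    (hconv.locallyLipschitz.continuous.lowerSemicontinuous.lowerSemicontinuousOn _)
  refine ⟨(InnerProductSpace.toDual ℝ E).symm l, c, fun x => ?_⟩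
  have hx : l x + c ≤ U x - ρ / 2 * ‖x‖ ^ 2 := hlc ⟨x, Set.mem_univ x⟩
  rw [InnerProductSpace.toDual_symm_apply]
  linarith

theorem integrable_exp_neg_of_strongConvexOn [MeasurableSpace E] [BorelSpace E] (hρ : 0 < ρ)
    (hU : StrongConvexOn univ ρ U) : Integrable (fun x => exp (-U x)) := by
  obtain ⟨v, c, hle⟩ := exists_sq_norm_add_inner_add_le_of_strongConvexOn hU
  have gaussian := (GaussianFourier.integrable_cexp_neg_mul_sq_norm_add
    (b := ((ρ / 2 : ℝ) : ℂ)) (by simpa using hρ) (-1) v).norm.const_mul (exp (-c))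
  refine gaussian.mono' (continuous_of_strongConvexOn_univ hU).neg.rexp.aestronglyMeasurable
    (Eventually.of_forall fun x => ?_)
  rw [Real.norm_of_nonneg (exp_pos _).le, Complex.norm_exp, ← exp_add, exp_le_exp]
  have hre : (-((ρ / 2 : ℝ) : ℂ) * (‖x‖ : ℂ) ^ 2 + -1 * (inner ℝ v x : ℝ)).re =
      -(ρ / 2 * ‖x‖ ^ 2) - inner ℝ v x := by
    norm_cast
    simp [sub_eq_add_neg]
  rw [hre]
  linarith [hle x]

end StrongConvexOn

section Gibbs

variable {d : ℕ} {U g w : EuclideanSpace ℝ (Fin d) → ℝ} {ρ s t : ℝ}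

/-- The normalizing constant `∫ exp (-V)` of the Gibbs measure `gibbs V`, with value in `ℝ≥0∞` as
in the definition of `gibbs`. -/
noncomputable def partitionFunction (V : EuclideanSpace ℝ (Fin d) → ℝ) : ℝ≥0∞ :=
  ∫⁻ x, ENNReal.ofReal (exp (-V x))

theorem partitionFunction_eq_ofReal_integral (hU : Integrable fun x => exp (-U x)) :
    partitionFunction U = ENNReal.ofReal (∫ x, exp (-U x)) :=
  (ofReal_integral_eq_lintegral_ofReal hU (Eventually.of_forall fun _ => (exp_pos _).le)).symm

theorem partitionFunction_ne_zero (hU : Integrable fun x => exp (-U x)) :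
    partitionFunction U ≠ 0 := by
  simpa [partitionFunction_eq_ofReal_integral hU] using integral_exp_pos hU

theorem partitionFunction_ne_top (hU : Integrable fun x => exp (-U x)) :
    partitionFunction U ≠ ∞ := by
  simp [partitionFunction_eq_ofReal_integral hU]

theorem isProbabilityMeasure_gibbs (hU : Integrable fun x => exp (-U x)) :
    IsProbabilityMeasure (gibbs U) := by
  refine ⟨?_⟩
  rw [gibbs, Measure.smul_apply, withDensity_apply _ .univ, setLIntegral_univ]
  exact ENNReal.inv_mul_cancel (partitionFunction_ne_zero hU) (partitionFunction_ne_top hU)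

theorem lintegral_gibbs (hU : Measurable U) {φ : EuclideanSpace ℝ (Fin d) → ℝ≥0∞}
    (hφ : Measurable φ) : ∫⁻ x, φ x ∂gibbs U =
      (partitionFunction U)⁻¹ * ∫⁻ x, ENNReal.ofReal (exp (-U x)) * φ x := by
  rw [gibbs, lintegral_smul_measure, lintegral_withDensity_eq_lintegral_mul _ (by fun_prop) hφ]
  rfl

theorem rpow_lintegral_exp_div_gibbs_le (hρ : 0 < ρ) (hU : StrongConvexOn univ ρ U) (ht : 0 < t)
    (hs : 0 < s) (hts : t + s = 1) (hg : Measurable g) (hw : Measurable w)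
    (H : ∀ x y, g x ≤ w (t • x + s • y) + t * s * (ρ / 2 * ‖x - y‖ ^ 2)) :
    (∫⁻ x, ENNReal.ofReal (exp (g x / t)) ∂gibbs U) ^ t ≤
      ∫⁻ x, ENNReal.ofReal (exp (w x)) ∂gibbs U := by
  have hUm : Measurable U := (continuous_of_strongConvexOn_univ hU).measurable
  have hUi := integrable_exp_neg_of_strongConvexOn hρ hU
  have pointwise (x y : EuclideanSpace ℝ (Fin d)) :
      (ENNReal.ofReal (exp (-U x)) * ENNReal.ofReal (exp (g x / t))) ^ t *
        ENNReal.ofReal (exp (-U y)) ^ s ≤ ENNReal.ofReal (exp (-U (t • x + s • y))) *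
          ENNReal.ofReal (exp (w (t • x + s • y))) := by
    simp only [← ENNReal.ofReal_mul (exp_pos _).le, ← exp_add,
      ENNReal.ofReal_rpow_of_pos (exp_pos _), ← exp_mul]
    refine ENNReal.ofReal_le_ofReal (exp_le_exp.2 ?_)
    have hUxy := hU.2 (Set.mem_univ x) (Set.mem_univ y) ht.le hs.le hts
    simp only [smul_eq_mul] at hUxy
    have hgt : g x / t * t = g x := div_mul_cancel₀ _ ht.ne'
    linarith [H x y]
  have pl := prekopaLeindler_volume_euclideanSpace d ht hs hts
    (f := fun x => ENNReal.ofReal (exp (-U x)) * ENNReal.ofReal (exp (g x / t)))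
    (g := fun x => ENNReal.ofReal (exp (-U x)))
    (h := fun x => ENNReal.ofReal (exp (-U x)) * ENNReal.ofReal (exp (w x)))
    (by fun_prop) (by fun_prop) (by fun_prop) pointwise
  rw [lintegral_gibbs hUm (by fun_prop), lintegral_gibbs hUm (by fun_prop)]
  set Z := partitionFunction U
  set A := ∫⁻ x, ENNReal.ofReal (exp (-U x)) * ENNReal.ofReal (exp (g x / t))
  have hZ0 : Z ≠ 0 := partitionFunction_ne_zero hUi
  have hZ_top : Z ≠ ∞ := partitionFunction_ne_top hUi
  calc (Z⁻¹ * A) ^ t = Z⁻¹ ^ (t + s) * Z ^ s * A ^ t := by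
        rw [ENNReal.mul_rpow_of_nonneg _ _ ht.le, ENNReal.rpow_add_of_nonneg _ _ ht.le hs.le,
          mul_assoc (Z⁻¹ ^ t), ← ENNReal.mul_rpow_of_nonneg _ _ hs.le,
          ENNReal.inv_mul_cancel hZ0 hZ_top, ENNReal.one_rpow, mul_one]
    _ = Z⁻¹ * (A ^ t * Z ^ s) := by rw [hts, ENNReal.rpow_one]; ring
    _ ≤ Z⁻¹ * ∫⁻ x, ENNReal.ofReal (exp (-U x)) * ENNReal.ofReal (exp (w x)) := by gcongr; exact pl

theorem rpow_integral_exp_div_gibbs_le (hρ : 0 < ρ) (hU : StrongConvexOn univ ρ U) (ht : 0 < t)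
    (hs : 0 < s) (hts : t + s = 1) (hg : Measurable g) (hw : Measurable w)
    (hgi : Integrable (fun x => exp (g x / t)) (gibbs U))
    (hwi : Integrable (fun x => exp (w x)) (gibbs U))
    (H : ∀ x y, g x ≤ w (t • x + s • y) + t * s * (ρ / 2 * ‖x - y‖ ^ 2)) :
    (∫ x, exp (g x / t) ∂gibbs U) ^ t ≤ ∫ x, exp (w x) ∂gibbs U := by
  have exp_nonneg (u : EuclideanSpace ℝ (Fin d) → ℝ) : 0 ≤ fun x => exp (u x) :=
    fun x => (exp_pos _).le
  rw [← ENNReal.ofReal_le_ofReal_iff (integral_nonneg (exp_nonneg w)),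
    ← ENNReal.ofReal_rpow_of_nonneg (integral_nonneg (exp_nonneg fun x => g x / t)) ht.le,
    ofReal_integral_eq_lintegral_ofReal hgi (Eventually.of_forall (exp_nonneg _)),
    ofReal_integral_eq_lintegral_ofReal hwi (Eventually.of_forall (exp_nonneg _))]
  exact rpow_lintegral_exp_div_gibbs_le hρ hU ht hs hts hg hw H

theorem rpow_integral_exp_div_gibbs_le_of_lipschitzWith_fderiv {C : ℝ≥0} (hρ : 0 < ρ)
    (hU : StrongConvexOn univ ρ U) (ht : 0 < t) (hs : 0 < s) (hts : t + s = 1)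
    (hg : ContDiff ℝ 1 g) (hC : LipschitzWith C (fderiv ℝ g)) {q : ℝ} (hq : 0 < q)
    (hqρ : q + 2 * C * s ≤ ρ * t) (hgi : Integrable (fun x => exp (g x / t)) (gibbs U))
    (hwi : Integrable (fun x => exp (g x + s * (gradSq g x / (2 * q)))) (gibbs U)) :
    (∫ x, exp (g x / t) ∂gibbs U) ^ t ≤
      ∫ x, exp (g x + s * (gradSq g x / (2 * q))) ∂gibbs U := by
  obtain rfl : t = 1 - s := by linarith
  have hgm : Measurable g := hg.continuous.measurable
  have hGm : Measurable (gradSq g) := (continuous_gradSq hg).measurable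
  refine rpow_integral_exp_div_gibbs_le hρ hU ht hs hts hgm (by fun_prop) hgi hwi fun x y => ?_
  set z := (1 - s) • x + s • y with hz
  have hxz : x - z = s • (x - y) := by
    rw [hz]
    module
  have taylor := le_add_fderiv_add_of_lipschitzWith_fderiv (hg.differentiable one_ne_zero) hC x z
  rw [hxz, norm_smul, Real.norm_of_nonneg hs.le, map_smul, smul_eq_mul] at taylor
  have young := mul_le_mul_of_nonneg_left (fderiv_apply_le_gradSq_div_add g z (x - y) hq) hs.le
  have curvature := mul_le_mul_of_nonneg_right hqρ (show 0 ≤ s / 2 * ‖x - y‖ ^ 2 by positivity)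
  linarith

end Gibbs

/-! ### Entropy of an exponential -/

section ExpIntegral

variable {α : Type*} [MeasurableSpace α] {μ : Measure α} {g G : α → ℝ}

theorem integrable_comp_of_norm_le {E F : Type*} [IsFiniteMeasure μ] [NormedAddCommGroup E]
    [ProperSpace E] [NormedAddCommGroup F] {φ : E → F} (hφ : Continuous φ) {h : α → E}
    (hh : AEStronglyMeasurable h μ) {K : ℝ} (hK : ∀ x, ‖h x‖ ≤ K) :
    Integrable (fun x => φ (h x)) μ := by
  obtain ⟨C, hC⟩ := (isCompact_closedBall (0 : E) K).exists_bound_of_continuousOn hφ.continuousOn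
  exact .of_bound (hφ.comp_aestronglyMeasurable hh) C
    (Eventually.of_forall fun x => hC _ (mem_closedBall_zero_iff.2 (hK x)))

theorem exp_mul_integral_exp_le [NeZero μ] (r : ℝ) (hg : Integrable (fun x => exp (g x)) μ)
    (hgg : Integrable (fun x => exp (g x) * g x) μ)
    (hrg : Integrable (fun x => exp ((1 + r) * g x)) μ) :
    exp (r * ((∫ x, exp (g x) * g x ∂μ) / ∫ x, exp (g x) ∂μ)) * ∫ x, exp (g x) ∂μ ≤
      ∫ x, exp ((1 + r) * g x) ∂μ := by
  set I := ∫ x, exp (g x) ∂μ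
  set m := (∫ x, exp (g x) * g x ∂μ) / I
  have hm_mul : m * I = ∫ x, exp (g x) * g x ∂μ := div_mul_cancel₀ _ (integral_exp_pos hg).ne'
  have tangent_line (x : α) : exp (r * m) * ((1 - r * m) * exp (g x) + r * (exp (g x) * g x)) ≤
      exp ((1 + r) * g x) :=
    calc exp (r * m) * ((1 - r * m) * exp (g x) + r * (exp (g x) * g x))
        = exp (r * m + g x) * (r * g x - r * m + 1) := by rw [exp_add]; ring
      _ ≤ exp (r * m + g x) * exp (r * g x - r * m) := by gcongr; exact add_one_le_exp _
      _ = exp ((1 + r) * g x) := by rw [← exp_add]; ring_nf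
  calc exp (r * m) * I
      = ∫ x, exp (r * m) * ((1 - r * m) * exp (g x) + r * (exp (g x) * g x)) ∂μ := by
        rw [integral_const_mul, integral_add (hg.const_mul _) (hgg.const_mul _),
          integral_const_mul, integral_const_mul, ← hm_mul]
        ring
    _ ≤ ∫ x, exp ((1 + r) * g x) ∂μ :=
        integral_mono (((hg.const_mul _).add (hgg.const_mul _)).const_mul _) hrg tangent_line

theorem integral_exp_add_mul_le {η K : ℝ} (hg : Integrable (fun x => exp (g x)) μ)
    (hG : AEStronglyMeasurable G μ) (hGK : ∀ x, |G x| ≤ K) (hη : |η| * K ≤ 1) :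
    ∫ x, exp (g x + η * G x) ∂μ ≤ ∫ x, exp (g x) ∂μ + η * ∫ x, exp (g x) * G x ∂μ +
      η ^ 2 * ∫ x, exp (g x) * G x ^ 2 ∂μ := by
  have hG_int : Integrable (fun x => exp (g x) * G x) μ :=
    hg.mul_bdd hG (Eventually.of_forall hGK)
  have hG2_int : Integrable (fun x => exp (g x) * G x ^ 2) μ := by
    simpa only [pow_two, mul_assoc] using hG_int.mul_bdd hG (Eventually.of_forall hGK)
  have hlin_int := hg.add (hG_int.const_mul η)
  have taylor (x : α) : exp (g x + η * G x) ≤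
      exp (g x) + η * (exp (g x) * G x) + η ^ 2 * (exp (g x) * G x ^ 2) := by
    have hηG : |η * G x| ≤ 1 := by
      rw [abs_mul]
      exact (mul_le_mul_of_nonneg_left (hGK x) (abs_nonneg η)).trans hη
    have := (abs_le.1 (abs_exp_sub_one_sub_id_le hηG)).2
    calc exp (g x + η * G x) = exp (g x) * exp (η * G x) := exp_add _ _
      _ ≤ exp (g x) * (1 + η * G x + (η * G x) ^ 2) := by gcongr; linarith
      _ = _ := by ring
  refine (integral_mono_of_nonneg (Eventually.of_forall fun x => (exp_pos _).le)
    (hlin_int.add (hG2_int.const_mul (η ^ 2))) (Eventually.of_forall taylor)).trans_eq ?_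
  rw [integral_add' hlin_int (hG2_int.const_mul (η ^ 2)), integral_add' hg (hG_int.const_mul η),
    integral_const_mul, integral_const_mul]

end ExpIntegral

section ExpEntropy

variable {d : ℕ} {μ : Measure (EuclideanSpace ℝ (Fin d))} {g G : EuclideanSpace ℝ (Fin d) → ℝ}

theorem entropy_exp : entropy μ (fun x => exp (g x)) =
    ∫ x, exp (g x) * g x ∂μ - (∫ x, exp (g x) ∂μ) * log (∫ x, exp (g x) ∂μ) := by
  simp only [entropy, log_exp]

theorem integral_exp_add_mul_entropy_exp_le [NeZero μ] {s : ℝ} (hs : s < 1)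
    (hg : Integrable (fun x => exp (g x)) μ) (hgg : Integrable (fun x => exp (g x) * g x) μ)
    (hsg : Integrable (fun x => exp (g x / (1 - s))) μ) :
    ∫ x, exp (g x) ∂μ + s * entropy μ (fun x => exp (g x)) ≤
      (∫ x, exp (g x / (1 - s)) ∂μ) ^ (1 - s) := by
  have hs' : 0 < 1 - s := by linarith
  have hr (x : EuclideanSpace ℝ (Fin d)) : (1 + s / (1 - s)) * g x = g x / (1 - s) := by
    field_simp
    ring
  have jensen := exp_mul_integral_exp_le (s / (1 - s)) hg hgg (by simpa only [hr] using hsg)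
  simp only [hr] at jensen
  rw [entropy_exp]
  set I := ∫ x, exp (g x) ∂μ
  set J := ∫ x, exp (g x) * g x ∂μ
  have hI_pos : 0 < I := integral_exp_pos hg
  calc I + s * (J - I * log I) = I * (s * (J / I - log I) + 1) := by field_simp; ring
    _ ≤ I * exp (s * (J / I - log I)) := by gcongr; exact add_one_le_exp _
    _ = (exp (s / (1 - s) * (J / I)) * I) ^ (1 - s) := by
        rw [mul_rpow (exp_pos _).le hI_pos.le, ← exp_mul, rpow_def_of_pos hI_pos, ← exp_add]
        nth_rw 1 [← exp_log hI_pos]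
        rw [← exp_add]
        congr 1
        field_simp
        ring
    _ ≤ (∫ x, exp (g x / (1 - s)) ∂μ) ^ (1 - s) := rpow_le_rpow (by positivity) jensen hs'.le

theorem entropy_exp_le_of_eventually_rpow_integral_le [IsProbabilityMeasure μ] {K : ℝ}
    (hg : AEStronglyMeasurable g μ) (hgK : ∀ x, |g x| ≤ K) (hG : AEStronglyMeasurable G μ)
    (hGK : ∀ x, |G x| ≤ K) {c : ℝ → ℝ} {c₀ : ℝ} (hc : Tendsto c (𝓝[>] 0) (𝓝 c₀))
    (H : ∀ᶠ s in 𝓝[>] (0 : ℝ), (∫ x, exp (g x / (1 - s)) ∂μ) ^ (1 - s) ≤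
      ∫ x, exp (g x + s * c s * G x) ∂μ) :
    entropy μ (fun x => exp (g x)) ≤ c₀ * ∫ x, exp (g x) * G x ∂μ := by
  have integrable {φ : ℝ → ℝ} (hφ : Continuous φ) : Integrable (fun x => φ (g x)) μ :=
    integrable_comp_of_norm_le hφ hg hgK
  have hs : Tendsto (fun s : ℝ => s) (𝓝[>] 0) (𝓝 0) := tendsto_id.mono_left nhdsWithin_le_nhds
  have hlim : Tendsto (fun s => c s * (∫ x, exp (g x) * G x ∂μ) +
      s * c s ^ 2 * ∫ x, exp (g x) * G x ^ 2 ∂μ) (𝓝[>] 0) (𝓝 (c₀ * ∫ x, exp (g x) * G x ∂μ)) := by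
    simpa using (hc.mul_const _).add ((hs.mul (hc.pow 2)).mul_const _)
  have hsmall : ∀ᶠ s in 𝓝[>] (0 : ℝ), |s * c s| * K < 1 := by
    have := (hs.mul hc).abs.mul_const K
    rw [zero_mul, abs_zero, zero_mul] at this
    exact this.eventually_lt_const one_pos
  refine ge_of_tendsto hlim ?_
  filter_upwards [H, hsmall, hs.eventually_lt_const one_pos, self_mem_nhdsWithin]
    with s hHs hsK hs1 (hs0 : 0 < s)
  have lower := integral_exp_add_mul_entropy_exp_le hs1 (integrable continuous_exp)
    (integrable (continuous_exp.mul continuous_id)) (integrable (φ := fun a => exp (a / (1 - s)))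
      (by fun_prop))
  have upper := integral_exp_add_mul_le (integrable continuous_exp) hG hGK hsK.le
  refine le_of_mul_le_mul_left ?_ hs0
  linarith

theorem entropy_exp_le_of_strongConvexOn {U : EuclideanSpace ℝ (Fin d) → ℝ} {ρ K : ℝ} {C : ℝ≥0}
    (hρ : 0 < ρ) (hU : StrongConvexOn univ ρ U) (hg : ContDiff ℝ 1 g)
    (hC : LipschitzWith C (fderiv ℝ g)) (hgK : ∀ x, |g x| ≤ K) (hGK : ∀ x, |gradSq g x| ≤ K) :
    entropy (gibbs U) (fun x => exp (g x)) ≤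
      1 / (2 * ρ) * ∫ x, exp (g x) * gradSq g x ∂gibbs U := by
  have := isProbabilityMeasure_gibbs (integrable_exp_neg_of_strongConvexOn hρ hU)
  have hgm := hg.continuous.aestronglyMeasurable (μ := gibbs U)
  have hGm := (continuous_gradSq hg).aestronglyMeasurable (μ := gibbs U)
  set q : ℝ → ℝ := fun s => ρ * (1 - s) - 2 * C * s with hq
  have hq_tendsto : Tendsto q (𝓝[>] 0) (𝓝 ρ) := by
    have : Tendsto q (𝓝 0) (𝓝 (q 0)) := Continuous.tendsto (by fun_prop) 0
    simpa [hq] using this.mono_left nhdsWithin_le_nhds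
  have hc : Tendsto (fun s => 1 / (2 * q s)) (𝓝[>] 0) (𝓝 (1 / (2 * ρ))) :=
    tendsto_const_nhds.div (hq_tendsto.const_mul 2) (by positivity)
  refine entropy_exp_le_of_eventually_rpow_integral_le hgm hgK hGm hGK hc ?_
  filter_upwards [hq_tendsto.eventually_const_lt hρ, self_mem_nhdsWithin,
    nhdsWithin_le_nhds (eventually_lt_nhds one_pos)] with s hqs (hs0 : 0 < s) hs1
  have integrable {φ : ℝ × ℝ → ℝ} (hφ : Continuous φ) :
      Integrable (fun x => φ (g x, gradSq g x)) (gibbs U) :=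
    integrable_comp_of_norm_le hφ (hgm.prodMk hGm) fun x => max_le (hgK x) (hGK x)
  have hq_div (x : EuclideanSpace ℝ (Fin d)) :
      s * (1 / (2 * q s)) * gradSq g x = s * (gradSq g x / (2 * q s)) := by ring
  simp only [hq_div]
  exact rpow_integral_exp_div_gibbs_le_of_lipschitzWith_fderiv hρ hU (sub_pos.2 hs1) hs0 (by ring)
    hg hC hqs (by simp [hq]) (integrable (φ := fun p => exp (p.1 / (1 - s))) (by fun_prop))
    (integrable (φ := fun p => exp (p.1 + s * (p.2 / (2 * q s)))) (by fun_prop))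

end ExpEntropy

/-! ### The logarithmic Sobolev inequality for strongly log-concave measures -/

section LogSobolev

variable {d : ℕ} {μ : Measure (EuclideanSpace ℝ (Fin d))} {f : EuclideanSpace ℝ (Fin d) → ℝ}

/-- The measure `μ` satisfies the logarithmic Sobolev inequality
`Ent_μ (f ^ 2) ≤ C * ∫ |∇f| ^ 2 dμ`, tested on compactly supported `C ^ 2` functions. -/
def LogSobolevInequality (μ : Measure (EuclideanSpace ℝ (Fin d))) (C : ℝ) : Prop :=
  ∀ f : EuclideanSpace ℝ (Fin d) → ℝ, ContDiff ℝ 2 f → HasCompactSupport f →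
    entropy μ (fun x => f x ^ 2) ≤ C * ∫ x, gradSq f x ∂μ

theorem LogSobolevInequality.mono {C D : ℝ} (h : LogSobolevInequality μ C) (hCD : C ≤ D) :
    LogSobolevInequality μ D := fun f hf hfc =>
  (h f hf hfc).trans (mul_le_mul_of_nonneg_right hCD (integral_nonneg (gradSq_nonneg f)))

theorem integrable_gradSq [IsFiniteMeasure μ] (hf : ContDiff ℝ 1 f) (hfc : HasCompactSupport f) :
    Integrable (gradSq f) μ :=
  (continuous_gradSq hf).integrable_of_hasCompactSupport (hasCompactSupport_gradSq (hfc.fderiv ℝ))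

theorem tendsto_entropy_add_const [IsProbabilityMeasure μ] {h : EuclideanSpace ℝ (Fin d) → ℝ}
    {K : ℝ} (hh : AEStronglyMeasurable h μ) (hK : ∀ x, |h x| ≤ K) :
    Tendsto (fun ε => entropy μ fun x => h x + ε) (𝓝 0) (𝓝 (entropy μ h)) := by
  have hint : Integrable h μ := .of_bound hh K (Eventually.of_forall hK)
  obtain ⟨C, hC⟩ := (isCompact_Icc (a := -(K + 1)) (b := K + 1)).exists_bound_of_continuousOn
    continuous_mul_log.continuousOn
  have translate (a : ℝ) :
      Tendsto (fun ε => (a + ε) * log (a + ε)) (𝓝 0) (𝓝 (a * log a)) := by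
    have := (continuous_mul_log.comp (continuous_const_add a)).tendsto 0
    simpa only [Function.comp_def, add_zero] using this
  have hmean (ε : ℝ) : ∫ x, h x + ε ∂μ = ∫ x, h x ∂μ + ε := by
    simp [integral_add hint (integrable_const ε)]
  have hcross : Tendsto (fun ε => (∫ x, h x + ε ∂μ) * log (∫ x, h x + ε ∂μ)) (𝓝 0)
      (𝓝 ((∫ x, h x ∂μ) * log (∫ x, h x ∂μ))) := by
    simpa only [hmean] using translate (∫ x, h x ∂μ)
  refine Tendsto.sub (tendsto_integral_filter_of_dominated_convergence (fun _ => C)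
    (Eventually.of_forall fun ε => continuous_mul_log.comp_aestronglyMeasurable
      (hh.add aestronglyMeasurable_const)) ?_ (integrable_const C)
    (Eventually.of_forall fun x => translate (h x))) hcross
  filter_upwards [Metric.ball_mem_nhds 0 one_pos] with ε hε
  refine Eventually.of_forall fun x => hC _ (abs_le.1 ((abs_add_le _ _).trans ?_))
  exact add_le_add (hK x) (mem_ball_zero_iff.1 hε).le

theorem exp_log_mul_gradSq_log_sq_add_le {ε : ℝ} (hε : 0 < ε) {x : EuclideanSpace ℝ (Fin d)}
    (hf : DifferentiableAt ℝ f x) :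
    exp (log (f x ^ 2 + ε)) * gradSq (fun y => log (f y ^ 2 + ε)) x ≤ 4 * gradSq f x := by
  have hpos : 0 < f x ^ 2 + ε := by positivity
  have hderiv : fderiv ℝ (fun y => log (f y ^ 2 + ε)) x =
      (2 * f x / (f x ^ 2 + ε)) • fderiv ℝ f x := by
    rw [(((hf.hasFDerivAt.pow 2).add_const ε).log hpos.ne').fderiv, smul_smul]
    congr 1
    simp
    ring
  rw [exp_log hpos, gradSq_eq_norm_fderiv_sq, gradSq_eq_norm_fderiv_sq, hderiv, norm_smul, mul_pow,
    norm_eq_abs, sq_abs, ← mul_assoc]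
  gcongr
  rw [div_pow, mul_div_assoc', div_le_iff₀ (by positivity)]
  nlinarith

theorem entropy_exp_le_of_strongConvexOn_of_hasCompactSupport {U g : EuclideanSpace ℝ (Fin d) → ℝ}
    {ρ c : ℝ} (hρ : 0 < ρ) (hU : StrongConvexOn univ ρ U) (hg : ContDiff ℝ 2 g)
    (hgc : HasCompactSupport fun x => g x - c) :
    entropy (gibbs U) (fun x => exp (g x)) ≤
      1 / (2 * ρ) * ∫ x, exp (g x) * gradSq g x ∂gibbs U := by
  have hg1 : ContDiff ℝ 1 g := hg.of_le one_le_two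
  have hDg_supp : HasCompactSupport (fderiv ℝ g) := by
    rw [show fderiv ℝ g = fderiv ℝ (fun x => g x - c) from
      funext fun x => (fderiv_sub_const c).symm]
    exact hgc.fderiv ℝ
  obtain ⟨C, hC⟩ := ContDiff.lipschitzWith_of_hasCompactSupport hDg_supp
    (hg.fderiv_right (m := 1) (by norm_num)) one_ne_zero
  obtain ⟨K₁, hK₁⟩ := hgc.exists_bound_of_continuous (hg.continuous.sub continuous_const)
  obtain ⟨K₂, hK₂⟩ := (hasCompactSupport_gradSq hDg_supp).exists_bound_of_continuous
    (continuous_gradSq hg1)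
  have hgK (x : EuclideanSpace ℝ (Fin d)) : |g x| ≤ K₁ + |c| := by
    simpa using (abs_add_le (g x - c) c).trans (add_le_add_left (hK₁ x) |c|)
  exact entropy_exp_le_of_strongConvexOn hρ hU hg1 hC
    (fun x => (hgK x).trans (le_max_left _ K₂)) (fun x => (hK₂ x).trans (le_max_right _ _))

theorem entropy_gibbs_sq_add_le_of_strongConvexOn {U : EuclideanSpace ℝ (Fin d) → ℝ} {ρ ε : ℝ}
    (hρ : 0 < ρ) (hU : StrongConvexOn univ ρ U) (hf : ContDiff ℝ 2 f) (hfc : HasCompactSupport f)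
    (hε : 0 < ε) :
    entropy (gibbs U) (fun x => f x ^ 2 + ε) ≤ 2 / ρ * ∫ x, gradSq f x ∂gibbs U := by
  have := isProbabilityMeasure_gibbs (integrable_exp_neg_of_strongConvexOn hρ hU)
  have hpos (x : EuclideanSpace ℝ (Fin d)) : 0 < f x ^ 2 + ε := by positivity
  set g : EuclideanSpace ℝ (Fin d) → ℝ := fun x => log (f x ^ 2 + ε) with hg_def
  have hg : ContDiff ℝ 2 g := ((hf.pow 2).add contDiff_const).log fun x => (hpos x).ne'
  have hg_supp : HasCompactSupport (fun x => g x - log ε) :=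
    hfc.mono fun x hx hfx => hx (by simp [hg_def, hfx])
  calc entropy (gibbs U) (fun x => f x ^ 2 + ε) = entropy (gibbs U) (fun x => exp (g x)) := by
        simp only [hg_def, exp_log (hpos _)]
    _ ≤ 1 / (2 * ρ) * ∫ x, exp (g x) * gradSq g x ∂gibbs U :=
        entropy_exp_le_of_strongConvexOn_of_hasCompactSupport hρ hU hg hg_supp
    _ ≤ 1 / (2 * ρ) * ∫ x, 4 * gradSq f x ∂gibbs U := by
        refine mul_le_mul_of_nonneg_left (integral_mono_of_nonneg
          (Eventually.of_forall fun x => mul_nonneg (exp_pos _).le (gradSq_nonneg g x))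
          ((integrable_gradSq (hf.of_le one_le_two) hfc).const_mul 4) (Eventually.of_forall fun x =>
            exp_log_mul_gradSq_log_sq_add_le hε (hf.differentiable two_ne_zero x))) (by positivity)
    _ = 2 / ρ * ∫ x, gradSq f x ∂gibbs U := by
        rw [integral_const_mul]
        field_simp
        ring

theorem logSobolevInequality_gibbs_of_strongConvexOn {U : EuclideanSpace ℝ (Fin d) → ℝ} {ρ : ℝ}
    (hρ : 0 < ρ) (hU : StrongConvexOn univ ρ U) : LogSobolevInequality (gibbs U) (2 / ρ) := by
  intro f hf hfc
  have := isProbabilityMeasure_gibbs (integrable_exp_neg_of_strongConvexOn hρ hU)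
  have hf2 : Continuous fun x => f x ^ 2 := hf.continuous.pow 2
  have hf2_supp : HasCompactSupport fun x => f x ^ 2 := hfc.comp_left (zero_pow two_ne_zero)
  obtain ⟨K, hK⟩ := hf2_supp.exists_bound_of_continuous hf2
  refine le_of_tendsto ((tendsto_entropy_add_const hf2.aestronglyMeasurable hK).mono_left
    (nhdsWithin_le_nhds (s := Ioi 0))) ?_
  filter_upwards [self_mem_nhdsWithin] with ε hε
  exact entropy_gibbs_sq_add_le_of_strongConvexOn hρ hU hf hfc hε

end LogSobolev

/-! ### Bounded perturbations of the potential -/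

section Perturbation

variable {d : ℕ} {μ ν : Measure (EuclideanSpace ℝ (Fin d))}

theorem mul_klFun_div {m : ℝ} (hm : m ≠ 0) (a : ℝ) :
    m * klFun (a / m) = a * log a - a * log m + m - a := by
  rcases eq_or_ne a 0 with rfl | ha
  · simp [klFun_apply]
  · rw [klFun_apply, log_div ha hm]
    field_simp

theorem integral_mul_klFun_div [IsProbabilityMeasure μ] {h : EuclideanSpace ℝ (Fin d) → ℝ} {m : ℝ}
    (hm : m ≠ 0) (hh : Integrable h μ) (hhlog : Integrable (fun x => h x * log (h x)) μ) :
    ∫ x, m * klFun (h x / m) ∂μ = entropy μ h + m * klFun ((∫ x, h x ∂μ) / m) := by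
  simp only [mul_klFun_div hm, entropy]
  have hdiff : Integrable (fun x => h x * log (h x) - h x * log m) μ :=
    hhlog.sub (hh.mul_const _)
  have hsum : Integrable (fun x => h x * log (h x) - h x * log m + m) μ :=
    hdiff.add (integrable_const m)
  rw [integral_sub hsum hh, integral_add hdiff (integrable_const m),
    integral_sub hhlog (hh.mul_const _), integral_mul_const, integral_const, probReal_univ,
    one_smul]
  ring

/- The entropy is the minimum over `m` of `∫ m * klFun (h / m) dμ`, whose integrand is nonnegative
and hence monotone in the measure; it is evaluated at the minimizer for `ν`. -/
theorem entropy_le_mul_entropy_of_le_smul [IsProbabilityMeasure μ] [IsProbabilityMeasure ν]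
    {c : ℝ≥0∞} (hc : c ≠ ∞) (hμν : μ ≤ c • ν) {h : EuclideanSpace ℝ (Fin d) → ℝ} (h_nonneg : 0 ≤ h)
    (hh : Integrable h ν) (hhlog : Integrable (fun x => h x * log (h x)) ν) :
    entropy μ h ≤ c.toReal * entropy ν h := by
  set m := ∫ x, h x ∂ν with hm_def
  obtain hm | hm : m = 0 ∨ 0 < m := (integral_nonneg h_nonneg).eq_or_lt'
  · have hν : h =ᵐ[ν] 0 := (integral_eq_zero_iff_of_nonneg h_nonneg hh).1 hm
    have hμ : h =ᵐ[μ] 0 := (Measure.absolutelyContinuous_of_le_smul hμν).ae_eq hν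
    have entropy_eq_zero {κ : Measure (EuclideanSpace ℝ (Fin d))} (hκ : h =ᵐ[κ] 0) :
        entropy κ h = 0 := by
      have hκlog : (fun x => h x * log (h x)) =ᵐ[κ] 0 := hκ.mono fun x hx => by simp [hx]
      simp [entropy, integral_congr_ae hκ, integral_congr_ae hκlog]
    simp [entropy_eq_zero hν, entropy_eq_zero hμ]
  have hh' := hh.of_measure_le_smul hc hμν
  have hhlog' := hhlog.of_measure_le_smul hc hμν
  have hkl_nonneg (a : ℝ) (ha : 0 ≤ a) : 0 ≤ m * klFun (a / m) :=
    mul_nonneg hm.le (klFun_nonneg (div_nonneg ha hm.le))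
  have hkl_int : Integrable (fun x => m * klFun (h x / m)) (c • ν) := by
    simp only [mul_klFun_div hm.ne']
    exact (((hhlog.sub (hh.mul_const _)).add (integrable_const m)).sub hh).smul_measure hc
  calc entropy μ h ≤ entropy μ h + m * klFun ((∫ x, h x ∂μ) / m) :=
        le_add_of_nonneg_right (hkl_nonneg _ (integral_nonneg h_nonneg))
    _ = ∫ x, m * klFun (h x / m) ∂μ := (integral_mul_klFun_div hm.ne' hh' hhlog').symm
    _ ≤ ∫ x, m * klFun (h x / m) ∂(c • ν) := integral_mono_measure hμν
        (Eventually.of_forall fun x => hkl_nonneg _ (h_nonneg x)) hkl_int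
    _ = c.toReal * entropy ν h := by
        rw [integral_smul_measure, smul_eq_mul, integral_mul_klFun_div hm.ne' hh hhlog, ← hm_def,
          div_self hm.ne', klFun_one, mul_zero, add_zero]

theorem gibbs_le_smul_gibbs {U V : EuclideanSpace ℝ (Fin d) → ℝ} {a : ℝ}
    (hU : Integrable fun x => exp (-U x)) (hV : Integrable fun x => exp (-V x))
    (hUV : ∀ x, U x ≤ V x + a) :
    gibbs V ≤ ENNReal.ofReal (exp a * (∫ x, exp (-U x)) / ∫ x, exp (-V x)) • gibbs U := by
  have hdensity : (volume : Measure (EuclideanSpace ℝ (Fin d))).withDensity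
        (fun x => ENNReal.ofReal (exp (-V x))) ≤ ENNReal.ofReal (exp a) •
      volume.withDensity fun x => ENNReal.ofReal (exp (-U x)) := by
    rw [← withDensity_smul' _ _ ENNReal.ofReal_ne_top]
    refine withDensity_mono (Eventually.of_forall fun x => ?_)
    rw [Pi.smul_apply, smul_eq_mul, ← ENNReal.ofReal_mul (exp_pos _).le, ← exp_add]
    exact ENNReal.ofReal_le_ofReal (exp_le_exp.2 (by linarith [hUV x]))
  have hcancel : ENNReal.ofReal (exp a * (∫ x, exp (-U x)) / ∫ x, exp (-V x)) *
      (partitionFunction U)⁻¹ = (partitionFunction V)⁻¹ * ENNReal.ofReal (exp a) := by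
    have := ENNReal.mul_inv_cancel (partitionFunction_ne_zero hU) (partitionFunction_ne_top hU)
    rw [ENNReal.ofReal_div_of_pos (integral_exp_pos hV), ENNReal.ofReal_mul (exp_pos _).le,
      ← partitionFunction_eq_ofReal_integral hU, ← partitionFunction_eq_ofReal_integral hV,
      ENNReal.div_eq_inv_mul, mul_assoc, mul_assoc, this, mul_one]
  change (partitionFunction V)⁻¹ • _ ≤ _ • (partitionFunction U)⁻¹ • _
  rw [smul_smul, hcancel, ← smul_smul]
  gcongr

theorem integrable_exp_neg_of_le_add {α : Type*} [MeasurableSpace α] {μ : Measure α} {U V : α → ℝ}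
    {a : ℝ} (hU : Integrable (fun x => exp (-U x)) μ) (hV : AEStronglyMeasurable V μ)
    (hUV : ∀ x, U x ≤ V x + a) : Integrable (fun x => exp (-V x)) μ := by
  refine (hU.const_mul (exp a)).mono' (continuous_exp.comp_aestronglyMeasurable hV.neg)
    (Eventually.of_forall fun x => ?_)
  rw [norm_of_nonneg (exp_pos _).le, ← exp_add]
  exact exp_le_exp.2 (by linarith [hUV x])

theorem LogSobolevInequality.gibbs_of_le_add {U V : EuclideanSpace ℝ (Fin d) → ℝ} {a b C : ℝ}
    (h : LogSobolevInequality (gibbs U) C) (hC : 0 ≤ C) (hU : Integrable fun x => exp (-U x))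
    (hV : Integrable fun x => exp (-V x)) (hUV : ∀ x, U x ≤ V x + a) (hVU : ∀ x, V x ≤ U x + b) :
    LogSobolevInequality (gibbs V) (exp (a + b) * C) := by
  intro f hf hfc
  have := isProbabilityMeasure_gibbs hU
  have := isProbabilityMeasure_gibbs hV
  have hf2 : Integrable (fun x => f x ^ 2) (gibbs U) :=
    (hf.continuous.pow 2).integrable_of_hasCompactSupport (hfc.comp_left (zero_pow two_ne_zero))
  have hf2log : Integrable (fun x => f x ^ 2 * log (f x ^ 2)) (gibbs U) :=
    (continuous_mul_log.comp (hf.continuous.pow 2)).integrable_of_hasCompactSupport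
      (hfc.mono fun x hx hfx => hx (by simp [hfx]))
  have hentropy := entropy_le_mul_entropy_of_le_smul ENNReal.ofReal_ne_top
    (gibbs_le_smul_gibbs hU hV hUV) (fun x => sq_nonneg (f x)) hf2 hf2log
  have henergy := integral_mono_measure (gibbs_le_smul_gibbs hV hU hVU)
    (Eventually.of_forall (gradSq_nonneg f)) ((integrable_gradSq (hf.of_le one_le_two)
      hfc).smul_measure ENNReal.ofReal_ne_top)
  have hZU := integral_exp_pos hU
  have hZV := integral_exp_pos hV
  set Z := ∫ x, exp (-U x)
  set Z' := ∫ x, exp (-V x)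
  rw [ENNReal.toReal_ofReal (by positivity)] at hentropy
  rw [integral_smul_measure, ENNReal.toReal_ofReal (by positivity), smul_eq_mul] at henergy
  calc entropy (gibbs V) (fun x => f x ^ 2)
      ≤ exp a * Z / Z' * entropy (gibbs U) (fun x => f x ^ 2) := hentropy
    _ ≤ exp a * Z / Z' * (C * ∫ x, gradSq f x ∂gibbs U) := by gcongr; exact h f hf hfc
    _ ≤ exp a * Z / Z' * (C * (exp b * Z' / Z * ∫ x, gradSq f x ∂gibbs V)) := by gcongr
    _ = exp (a + b) * C * ∫ x, gradSq f x ∂gibbs V := by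
        rw [exp_add]
        field_simp

end Perturbation

/-! ### The double-well potential -/

section DoubleWell

/-- A convex minorant of the double-well potential `‖x‖ ^ 4 / 4 - β * ‖x‖ ^ 2 / 2 + 1 / 16`. That
potential equals `(1 / 2 - β) / 2 * ‖x‖ ^ 2 + (‖x‖ ^ 2 - 1 / 2) ^ 2 / 4`; the well of the second
term is flattened here to make it convex. -/
noncomputable def convexifiedDoubleWell {E : Type*} [Norm E] (β : ℝ) (x : E) : ℝ :=
  (1 / 2 - β) / 2 * ‖x‖ ^ 2 + max (‖x‖ ^ 2 - 1 / 2) 0 ^ 2 / 4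

variable {E : Type*} {β : ℝ}

theorem convexifiedDoubleWell_le [Norm E] (x : E) :
    convexifiedDoubleWell β x ≤ ‖x‖ ^ 4 / 4 - β * ‖x‖ ^ 2 / 2 + 1 / 16 := by
  have hmax : max (‖x‖ ^ 2 - 1 / 2) 0 ^ 2 ≤ (‖x‖ ^ 2 - 1 / 2) ^ 2 :=
    sq_le_sq.2 ((abs_of_nonneg (le_max_right _ _)).trans_le
      (max_le (le_abs_self _) (abs_nonneg _)))
  rw [convexifiedDoubleWell]
  linarith

theorem doubleWell_le_convexifiedDoubleWell [SeminormedAddCommGroup E] (x : E) :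
    ‖x‖ ^ 4 / 4 - β * ‖x‖ ^ 2 / 2 ≤ convexifiedDoubleWell β x := by
  have hmax : (‖x‖ ^ 2 - 1 / 2) ^ 2 ≤ max (‖x‖ ^ 2 - 1 / 2) 0 ^ 2 + 1 / 4 := by
    rcases le_total (‖x‖ ^ 2 - 1 / 2) 0 with h | h
    · rw [max_eq_right h]
      nlinarith [sq_nonneg ‖x‖]
    · rw [max_eq_left h]
      linarith
  rw [convexifiedDoubleWell]
  linarith

theorem strongConvexOn_convexifiedDoubleWell [NormedAddCommGroup E] [InnerProductSpace ℝ E] :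
    StrongConvexOn univ (1 / 2 - β) (convexifiedDoubleWell β : E → ℝ) := by
  have hsq : ConvexOn ℝ univ fun x : E => ‖x‖ ^ 2 :=
    convexOn_univ_norm.pow (fun x _ => norm_nonneg x) 2
  have hmax : ConvexOn ℝ univ fun x : E => max (‖x‖ ^ 2 - 1 / 2) 0 :=
    (hsq.add_const (-(1 / 2))).sup (convexOn_const 0 convex_univ)
  have hsub : (fun x : E => convexifiedDoubleWell β x - (1 / 2 - β) / 2 * ‖x‖ ^ 2) =
      fun x => (1 / 4 : ℝ) • max (‖x‖ ^ 2 - 1 / 2) 0 ^ 2 := by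
    funext x
    rw [convexifiedDoubleWell, smul_eq_mul]
    ring
  rw [strongConvexOn_iff_convex, hsub]
  exact (hmax.pow (fun x _ => le_max_right _ _) 2).smul (by norm_num)

theorem lsi_doublewell_general {d : ℕ} (hβ : β < 1 / 2) :
    LogSobolevInequality (gibbs fun x : EuclideanSpace ℝ (Fin d) => ‖x‖ ^ 4 / 4 - β * ‖x‖ ^ 2 / 2)
      (4 * exp (1 / 16) / (1 - 2 * β)) := by
  have hρ : 0 < 1 / 2 - β := sub_pos.2 hβ
  have hU : StrongConvexOn univ (1 / 2 - β)
      (convexifiedDoubleWell β : EuclideanSpace ℝ (Fin d) → ℝ) :=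
    strongConvexOn_convexifiedDoubleWell
  have hUi := integrable_exp_neg_of_strongConvexOn hρ hU
  have hVi := integrable_exp_neg_of_le_add hUi
    (Continuous.aestronglyMeasurable (by fun_prop)) convexifiedDoubleWell_le
  have perturbed := (logSobolevInequality_gibbs_of_strongConvexOn hρ hU).gibbs_of_le_add
    (by positivity) hUi hVi convexifiedDoubleWell_le
    fun x => (doubleWell_le_convexifiedDoubleWell x).trans_eq (add_zero _).symm
  refine perturbed.mono (le_of_eq ?_)
  rw [add_zero]
  field_simp
  norm_num

end DoubleWell

/-- Dimension-free logarithmic Sobolev inequality for the double-well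
measure `μ(dx) ∝ exp(-|x|⁴/4 + β|x|²/2) dx`, `β ∈ (0, 1/2)`:
`Ent_μ(f²) ≤ (4e/(1-2β)) ∫ |∇f|² dμ`. -/
theorem lsi_doublewell {d : ℕ} (hd : 1 ≤ d) (β : ℝ) (hβ : 0 < β) (hβ' : β < 1 / 2) :
    ∀ f : EuclideanSpace ℝ (Fin d) → ℝ, ContDiff ℝ (⊤ : ℕ∞) f → HasCompactSupport f →
      entropy (gibbs fun x => ‖x‖ ^ 4 / 4 - β * ‖x‖ ^ 2 / 2) (fun x => f x ^ 2) ≤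
        4 * Real.exp 1 / (1 - 2 * β) *
          ∫ x, gradSq f x ∂(gibbs fun x => ‖x‖ ^ 4 / 4 - β * ‖x‖ ^ 2 / 2) := by
  intro f hf hfc
  have : 0 < 1 - 2 * β := by linarith
  exact (lsi_doublewell_general hβ').mono (by gcongr; norm_num) f (contDiff_infty.1 hf 2) hfc
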